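/- For all simplicial complexes 𝒦₁, 𝒦₂ over S, one has d(𝒦₁, 𝒦₂) = sup over n ≥ 0 of d(πₙ(𝒦₁), πₙ(𝒦₂)). -/

import Mathlib

open scoped BigOperators

/-- A simplicial complex over the vertex set `S`: a nonempty collection of
nonempty finite subsets of `S`, closed under taking nonempty subsets. -/
def IsSimplicialComplex {S : Type*} (K : Set (Finset S)) : Prop :=
  K.Nonempty ∧ (∀ F ∈ K, F.Nonempty) ∧
    ∀ F ∈ K, ∀ G : Finset S, G.Nonempty → G ⊆ F → G ∈ K

/-- Halved ℓ¹ distance between finitely supported real functions: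
`d(α,β) = (1/2) ∑ₛ |α s - β s|`. -/
noncomputable def l1dist {S : Type*} (α β : S →₀ ℝ) : ℝ :=
  (1 / 2) * (α - β).sum fun _ x => |x|

/-- The ℓ¹ geometric realization of a collection `K` of finite subsets of `S`:
finitely supported probability vectors whose support is a face of `K`. -/
def realization {S : Type*} (K : Set (Finset S)) : Set (S →₀ ℝ) :=
  {α | (∀ s, 0 ≤ α s) ∧ (α.sum fun _ x => x) = 1 ∧ α.support ∈ K}

/-- Distance from a point to a set of finitely supported functions. -/
noncomputable def distToSet {S : Type*} (α : S →₀ ℝ) (X : Set (S →₀ ℝ)) : ℝ :=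
  sInf (l1dist α '' X)

/-- One-sided Hausdorff distance between (the realizations of) two complexes. -/
noncomputable def hdelta {S : Type*} (K₁ K₂ : Set (Finset S)) : ℝ :=
  sSup ((fun α => distToSet α (realization K₂)) '' realization K₁)

/-- Hausdorff distance between (the realizations of) two simplicial complexes. -/
noncomputable def hdist {S : Type*} (K₁ K₂ : Set (Finset S)) : ℝ :=
  max (hdelta K₁ K₂) (hdelta K₂ K₁)

/-- `d(F, K)`: supremum of distances to `|K|₁` over probability vectors
supported exactly on `F`. -/
noncomputable def dFace {S : Type*} (F : Finset S) (K : Set (Finset S)) : ℝ :=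
  sSup ((fun α => distToSet α (realization K)) ''
    {α : S →₀ ℝ | (∀ s, 0 ≤ α s) ∧ (α.sum fun _ x => x) = 1 ∧ α.support = F})

/-- The `n`-skeleton of a simplicial complex. -/
def skeleton {S : Type*} (n : ℕ) (K : Set (Finset S)) : Set (Finset S) :=
  {F | F ∈ K ∧ F.card ≤ n + 1}

/-!
Half the ℓ¹-distance between two functions of equal total mass is the mass of `(α - β)⁺`. Hence
a probability vector supported in a face `G` is at distance at least `α(S \ G)` from `α`, and this
bound is attained by collapsing `α` onto `G`, i.e. by moving the mass of `α` off `G` to a single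
vertex of `G`. If that vertex is chosen in `supp α` whenever `G` meets `supp α`, the collapse has
no more support points than `α`. So for `α` in the `n`-skeleton, the distance to `|L|₁` is the
distance to the realization of the `n`-skeleton of `L`, and the suprema over the skeletons of `K`
exhaust the one over `K`.
-/

section Degree

variable {S R : Type*}

lemma finsupp_filter_nonneg [Zero R] [Preorder R] (p : S → Prop) [DecidablePred p] {α : S →₀ R}
    (hα : 0 ≤ α) : 0 ≤ α.filter p := by
  intro s
  rw [Finsupp.filter_apply]
  split_ifs
  exacts [hα s, le_rfl]

lemma support_nonempty_of_degree_ne_zero [AddCommMonoid R] {α : S →₀ R} (hα : α.degree ≠ 0) :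
    α.support.Nonempty :=
  Finsupp.support_nonempty_iff.2 fun h => hα (by rw [h, map_zero])

lemma finsupp_degree_nonneg [AddCommMonoid R] [PartialOrder R] [IsOrderedAddMonoid R]
    {α : S →₀ R} (hα : 0 ≤ α) : 0 ≤ α.degree :=
  Finset.sum_nonneg fun s _ => hα s

lemma finsupp_degree_monotone [AddCommGroup R] [PartialOrder R] [IsOrderedAddMonoid R] :
    Monotone (Finsupp.degree : (S →₀ R) → R) :=
  (monotone_iff_map_nonneg _).2 fun _ => finsupp_degree_nonneg

lemma finsupp_degree_abs [AddCommGroup R] [Lattice R] [IsOrderedAddMonoid R]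
    (α : S →₀ R) : |α|.degree = α.sum fun _ x => |x| := by
  have abs_apply (s : S) : |α| s = |α s| := rfl
  refine Finset.sum_subset (fun s hs => ?_) fun s _ hs => Finsupp.notMem_support_iff.1 hs
  rw [Finsupp.mem_support_iff, abs_apply] at hs
  exact Finsupp.mem_support_iff.2 fun hα => hs (by rw [hα, abs_zero])

end Degree

section L1Dist

variable {S : Type*} {α β : S →₀ ℝ}

lemma l1dist_nonneg (α β : S →₀ ℝ) : 0 ≤ l1dist α β :=
  mul_nonneg one_half_pos.le (Finset.sum_nonneg fun _ _ => abs_nonneg _)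

lemma l1dist_eq_degree_posPart_sub (h : α.degree = β.degree) :
    l1dist α β = (α - β)⁺.degree := by
  have hsum : |α - β|.degree + (α - β).degree = 2 • (α - β)⁺.degree := by
    rw [← map_add, abs_add_eq_two_nsmul_posPart, map_nsmul]
  rw [map_sub, h, sub_self, add_zero, finsupp_degree_abs, two_nsmul] at hsum
  rw [l1dist, hsum]
  ring

lemma l1dist_le_degree (hα : 0 ≤ α) (hβ : 0 ≤ β) (h : α.degree = β.degree) :
    l1dist α β ≤ α.degree := by
  rw [l1dist_eq_degree_posPart_sub h]
  exact finsupp_degree_monotone (sup_le (sub_le_self α hβ) hα)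

lemma distToSet_le {X : Set (S →₀ ℝ)} (hβ : β ∈ X) : distToSet α X ≤ l1dist α β :=
  csInf_le ⟨0, Set.forall_mem_image.2 fun _ _ => l1dist_nonneg _ _⟩ (Set.mem_image_of_mem _ hβ)

lemma le_distToSet {X : Set (S →₀ ℝ)} {c : ℝ} (hX : X.Nonempty)
    (hc : ∀ β ∈ X, c ≤ l1dist α β) : c ≤ distToSet α X :=
  le_csInf (hX.image _) (Set.forall_mem_image.2 hc)

end L1Dist

section Collapse

variable {S : Type*} [DecidableEq S] {G : Finset S} {α β : S →₀ ℝ}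

/-- The collapse of `α` onto the vertex set `G`: the mass of `α` outside `G` is moved to the single
vertex `v`, meant to lie in `G`. It realizes the distance from `α` to the simplex on `G`. -/
noncomputable def collapseOnto (G : Finset S) (v : S) (α : S →₀ ℝ) : S →₀ ℝ :=
  α.filter (· ∈ G) + Finsupp.single v (α.filter (· ∉ G)).degree

lemma collapseOnto_nonneg (G : Finset S) (v : S) (hα : 0 ≤ α) : 0 ≤ collapseOnto G v α :=
  add_nonneg (finsupp_filter_nonneg _ hα)
    (Finsupp.single_nonneg.2 (finsupp_degree_nonneg (finsupp_filter_nonneg _ hα)))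

@[simp]
lemma degree_collapseOnto (G : Finset S) (v : S) (α : S →₀ ℝ) :
    (collapseOnto G v α).degree = α.degree := by
  rw [collapseOnto, map_add, Finsupp.degree_single, ← map_add, Finsupp.filter_add_filter_not]

lemma support_collapseOnto_subset (G : Finset S) (v : S) (α : S →₀ ℝ) :
    (collapseOnto G v α).support ⊆ insert v (α.support ∩ G) := by
  refine Finsupp.support_add.trans (Finset.union_subset ?_ ?_)
  · rw [Finsupp.support_filter, Finset.filter_mem_eq_inter]
    exact Finset.subset_insert _ _
  · exact Finsupp.support_single_subset.trans (by simp)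

lemma posPart_sub_collapseOnto_le (G : Finset S) (v : S) (hα : 0 ≤ α) :
    (α - collapseOnto G v α)⁺ ≤ α.filter (· ∉ G) := by
  refine sup_le ?_ (finsupp_filter_nonneg _ hα)
  rw [sub_le_iff_le_add, collapseOnto, ← add_assoc, add_comm (α.filter (· ∉ G)),
    Finsupp.filter_add_filter_not]
  exact le_add_of_nonneg_right
    (Finsupp.single_nonneg.2 (finsupp_degree_nonneg (finsupp_filter_nonneg _ hα)))

lemma filter_notMem_le_posPart_sub (hβ : β.support ⊆ G) :
    α.filter (· ∉ G) ≤ (α - β)⁺ := by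
  intro s
  by_cases hs : s ∈ G
  · rw [Finsupp.filter_apply_neg (· ∉ G) α (not_not.2 hs)]
    exact posPart_nonneg (α - β) s
  · have hβs : β s = 0 := Finsupp.notMem_support_iff.1 fun h => hs (hβ h)
    rw [Finsupp.filter_apply_pos (· ∉ G) α hs]
    simpa only [Finsupp.sub_apply, hβs, sub_zero] using le_posPart (α - β) s

lemma l1dist_collapseOnto_le (v : S) (hα : 0 ≤ α) (h : α.degree = β.degree)
    (hβ : β.support ⊆ G) : l1dist α (collapseOnto G v α) ≤ l1dist α β := by
  rw [l1dist_eq_degree_posPart_sub (degree_collapseOnto G v α).symm, l1dist_eq_degree_posPart_sub h]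
  exact finsupp_degree_monotone
    ((posPart_sub_collapseOnto_le G v hα).trans (filter_notMem_le_posPart_sub hβ))

lemma exists_mem_card_insert_inter_le {F G : Finset S} (hF : F.Nonempty) (hG : G.Nonempty) :
    ∃ v ∈ G, (insert v (F ∩ G)).card ≤ F.card := by
  rcases (F ∩ G).eq_empty_or_nonempty with hFG | ⟨v, hv⟩
  · obtain ⟨v, hv⟩ := hG
    exact ⟨v, hv, by simpa [hFG] using hF⟩
  · refine ⟨v, Finset.mem_of_mem_inter_right hv, ?_⟩
    rw [Finset.insert_eq_of_mem hv]
    exact Finset.card_le_card Finset.inter_subset_left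

end Collapse

section Realization

variable {S : Type*} {K L : Set (Finset S)} {α β : S →₀ ℝ} {n : ℕ}

lemma mem_realization_iff : α ∈ realization K ↔ 0 ≤ α ∧ α.degree = 1 ∧ α.support ∈ K :=
  Iff.rfl

lemma support_nonempty_of_mem_realization (hα : α ∈ realization K) : α.support.Nonempty :=
  support_nonempty_of_degree_ne_zero ((mem_realization_iff.1 hα).2.1.trans_ne one_ne_zero)

lemma realization_mono (h : K ⊆ L) : realization K ⊆ realization L :=
  fun _ hα => ⟨hα.1, hα.2.1, h hα.2.2⟩

lemma skeleton_subset (n : ℕ) (K : Set (Finset S)) : skeleton n K ⊆ K :=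
  fun _ hF => hF.1

lemma iUnion_realization_skeleton (K : Set (Finset S)) :
    ⋃ n, realization (skeleton n K) = realization K := by
  refine (Set.iUnion_subset fun n => realization_mono (skeleton_subset n K)).antisymm fun α hα => ?_
  exact Set.mem_iUnion.2 ⟨α.support.card, hα.1, hα.2.1, hα.2.2, Nat.le_succ _⟩

lemma IsSimplicialComplex.exists_singleton_mem (hK : IsSimplicialComplex K) :
    ∃ v, {v} ∈ K := by
  obtain ⟨⟨F, hF⟩, hne, hdown⟩ := hK
  obtain ⟨v, hv⟩ := hne F hF
  exact ⟨v, hdown F hF _ (Finset.singleton_nonempty v) (Finset.singleton_subset_iff.2 hv)⟩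

lemma isSimplicialComplex_skeleton (hK : IsSimplicialComplex K) (n : ℕ) :
    IsSimplicialComplex (skeleton n K) := by
  obtain ⟨v, hv⟩ := hK.exists_singleton_mem
  obtain ⟨-, hne, hdown⟩ := hK
  exact ⟨⟨{v}, hv, by simp⟩, fun F hF => hne F hF.1, fun F hF G hG hGF =>
    ⟨hdown F hF.1 G hG hGF, (Finset.card_le_card hGF).trans hF.2⟩⟩

lemma IsSimplicialComplex.realization_nonempty (hK : IsSimplicialComplex K) :
    (realization K).Nonempty := by
  obtain ⟨v, hv⟩ := hK.exists_singleton_mem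
  refine ⟨Finsupp.single v 1, mem_realization_iff.2
    ⟨Finsupp.single_nonneg.2 zero_le_one, Finsupp.degree_single v 1, ?_⟩⟩
  rwa [Finsupp.support_single v one_ne_zero]

lemma l1dist_le_one (hα : α ∈ realization K) (hβ : β ∈ realization L) : l1dist α β ≤ 1 := by
  obtain ⟨hα₀, hα₁, -⟩ := mem_realization_iff.1 hα
  obtain ⟨hβ₀, hβ₁, -⟩ := mem_realization_iff.1 hβ
  exact (l1dist_le_degree hα₀ hβ₀ (hα₁.trans hβ₁.symm)).trans hα₁.le

lemma IsSimplicialComplex.exists_mem_realization_skeleton_l1dist_le (hL : IsSimplicialComplex L)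
    (hα : α ∈ realization (skeleton n K)) (hβ : β ∈ realization L) :
    ∃ γ ∈ realization (skeleton n L), l1dist α γ ≤ l1dist α β := by
  classical
  obtain ⟨v, hv, hcard⟩ := exists_mem_card_insert_inter_le
    (support_nonempty_of_mem_realization hα) (support_nonempty_of_mem_realization hβ)
  obtain ⟨hα₀, hα₁, -, hαn⟩ := mem_realization_iff.1 hα
  obtain ⟨-, hβ₁, hβL⟩ := mem_realization_iff.1 hβ
  let γ := collapseOnto β.support v α
  have hγsupp : γ.support ⊆ insert v (α.support ∩ β.support) := support_collapseOnto_subset _ v α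
  have hγβ : γ.support ⊆ β.support :=
    hγsupp.trans (Finset.insert_subset hv Finset.inter_subset_right)
  have hγ₁ : γ.degree = 1 := (degree_collapseOnto _ v α).trans hα₁
  have hγne : γ.support.Nonempty :=
    support_nonempty_of_degree_ne_zero (hγ₁.trans_ne one_ne_zero)
  have hγn : γ.support.card ≤ n + 1 := (Finset.card_le_card hγsupp).trans (hcard.trans hαn)
  exact ⟨γ, mem_realization_iff.2
      ⟨collapseOnto_nonneg _ v hα₀, hγ₁, hL.2.2 _ hβL _ hγne hγβ, hγn⟩,
    l1dist_collapseOnto_le v hα₀ (hα₁.trans hβ₁.symm) subset_rfl⟩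

lemma IsSimplicialComplex.distToSet_realization_skeleton (hL : IsSimplicialComplex L)
    (hα : α ∈ realization (skeleton n K)) :
    distToSet α (realization (skeleton n L)) = distToSet α (realization L) := by
  refine le_antisymm (le_distToSet hL.realization_nonempty fun β hβ => ?_)
    (le_distToSet (isSimplicialComplex_skeleton hL n).realization_nonempty fun γ hγ =>
      distToSet_le (realization_mono (skeleton_subset n L) hγ))
  obtain ⟨γ, hγ, hle⟩ := hL.exists_mem_realization_skeleton_l1dist_le hα hβ
  exact (distToSet_le hγ).trans hle

lemma isLUB_hdelta (hK : (realization K).Nonempty) (hL : (realization L).Nonempty) :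
    IsLUB ((distToSet · (realization L)) '' realization K) (hdelta K L) := by
  obtain ⟨β, hβ⟩ := hL
  exact isLUB_csSup (hK.image _)
    ⟨1, Set.forall_mem_image.2 fun _ hα => (distToSet_le hβ).trans (l1dist_le_one hα hβ)⟩

lemma IsSimplicialComplex.isLUB_range_hdelta_skeleton (hK : IsSimplicialComplex K)
    (hL : IsSimplicialComplex L) :
    IsLUB (Set.range fun n => hdelta (skeleton n K) (skeleton n L))
      (hdelta K L) := by
  have hlub (n : ℕ) : IsLUB ((distToSet · (realization L)) '' realization (skeleton n K))
      (hdelta (skeleton n K) (skeleton n L)) := by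
    rw [← Set.image_congr fun _ hα => hL.distToSet_realization_skeleton hα]
    exact isLUB_hdelta (isSimplicialComplex_skeleton hK n).realization_nonempty
      (isSimplicialComplex_skeleton hL n).realization_nonempty
  rw [isLUB_iUnion_iff_of_isLUB hlub, ← Set.image_iUnion, iUnion_realization_skeleton]
  exact isLUB_hdelta hK.realization_nonempty hL.realization_nonempty

end Realization

/-- The Hausdorff distance between two simplicial complexes is the supremum
over `n` of the distances between their `n`-skeletons. -/
theorem stmt5 {S : Type*} (K₁ K₂ : Set (Finset S))
    (h1 : IsSimplicialComplex K₁) (h2 : IsSimplicialComplex K₂) :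
    hdist K₁ K₂ = ⨆ n : ℕ, hdist (skeleton n K₁) (skeleton n K₂) := by
  have h₁₂ := h1.isLUB_range_hdelta_skeleton h2
  have h₂₁ := h2.isLUB_range_hdelta_skeleton h1
  simp only [hdist, ciSup_sup_eq h₁₂.bddAbove h₂₁.bddAbove, h₁₂.ciSup_eq, h₂₁.ciSup_eq]
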